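/- arXiv:1303.1284 — 2 statements merged into one kernel-verified Lean document; each statement's English description precedes it below -/
import Mathlib

section
/- Let Z¹ and Z² be independent generators on ℝ^d (defined on a common probability space), and suppose Z² generates the L¹-norm, i.e. E(max_{1≤i≤d} |x_i| Z²_i) = Σ_{i=1}^d |x_i| for all x ∈ ℝ^d. Then for all x ∈ ℝ^d, E(max_{1≤i≤d} |x_i| Z¹_i Z²_i) = Σ_{i=1}^d |x_i|; in other words, multiplication by the independence norm ‖·‖₁ always yields ‖·‖₁. -/
open MeasureTheory ProbabilityTheory

/-!
For nonnegative numbers, the maximum equals the sum exactly when at most one of them is nonzero.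
As the maximum never exceeds the sum, equality of their expectations forces almost sure equality,
so `Z₂` generates the `L¹`-norm only if almost surely at most one of its components is nonzero.
Multiplying by the nonnegative factors `|x i| * Z₁ i` preserves this property, hence the expected
maximum of the products is the sum of their expectations, which independence evaluates.
-/

section FiniteSup

variable {ι : Type*} [Fintype ι] {z : ι → ℝ}

lemma iSup_le_sum_of_nonneg (hz : ∀ i, 0 ≤ z i) : ⨆ i, z i ≤ ∑ i, z i :=
  Real.iSup_le (fun i ↦ Finset.single_le_sum (fun j _ ↦ hz j) (Finset.mem_univ i))
    (Finset.sum_nonneg fun i _ ↦ hz i)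

lemma norm_iSup_le_sum_norm (z : ι → ℝ) : ‖⨆ i, z i‖ ≤ ∑ i, ‖z i‖ := by
  cases isEmpty_or_nonempty ι
  · simp
  obtain ⟨k, hk⟩ := exists_eq_ciSup_of_finite (f := z)
  rw [← hk]
  exact Finset.single_le_sum (fun i _ ↦ norm_nonneg (z i)) (Finset.mem_univ k)

lemma support_subsingleton_of_iSup_eq_sum (hz : ∀ i, 0 ≤ z i) (h : ⨆ i, z i = ∑ i, z i) :
    (Function.support z).Subsingleton := by
  classical
  cases isEmpty_or_nonempty ι
  · exact Set.subsingleton_of_subsingleton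
  obtain ⟨k, hk⟩ := exists_eq_ciSup_of_finite (f := z)
  have sum_erase : ∑ i ∈ Finset.univ.erase k, z i = 0 := by
    linarith [Finset.add_sum_erase Finset.univ z (Finset.mem_univ k)]
  have eq_zero_of_ne : ∀ j, j ≠ k → z j = 0 := fun j hj ↦
    (Finset.sum_eq_zero_iff_of_nonneg fun i _ ↦ hz i).1 sum_erase j
      (Finset.mem_erase.2 ⟨hj, Finset.mem_univ j⟩)
  exact Set.subsingleton_of_forall_eq k fun j hj ↦ not_imp_comm.1 (eq_zero_of_ne j) hj

lemma sum_le_iSup_of_support_subsingleton (h : (Function.support z).Subsingleton) :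
    ∑ i, z i ≤ ⨆ i, z i := by
  obtain h_empty | ⟨k, hk⟩ := h.eq_empty_or_singleton
  · simp [Function.support_eq_empty_iff.1 h_empty]
  · have sum_eq : ∑ i, z i = z k := Fintype.sum_eq_single k fun j hj ↦
      Function.notMem_support.1 (hk ▸ hj)
    exact sum_eq.trans_le (le_ciSup (Set.finite_range z).bddAbove k)

lemma iSup_eq_sum_iff_support_subsingleton (hz : ∀ i, 0 ≤ z i) :
    ⨆ i, z i = ∑ i, z i ↔ (Function.support z).Subsingleton :=
  ⟨support_subsingleton_of_iSup_eq_sum hz, fun h ↦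
    (iSup_le_sum_of_nonneg hz).antisymm (sum_le_iSup_of_support_subsingleton h)⟩

end FiniteSup

section ExpectedSup

variable {ι : Type*} {Ω : Type*} [MeasurableSpace Ω] {μ : Measure Ω} {Y Z : Ω → ι → ℝ}

lemma integrable_iSup [Finite ι] (hint : ∀ i, Integrable (fun ω ↦ Z ω i) μ) :
    Integrable (fun ω ↦ ⨆ i, Z ω i) μ := by
  have := Fintype.ofFinite ι
  refine (integrable_finsetSum Finset.univ fun i _ ↦ (hint i).norm).mono'
    (AEMeasurable.iSup fun i ↦ (hint i).aemeasurable).aestronglyMeasurable (ae_of_all μ fun ω ↦ ?_)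
  exact norm_iSup_le_sum_norm (Z ω)

variable [Fintype ι]

lemma integral_iSup_eq_sum_integral_iff (hZ : ∀ᵐ ω ∂μ, ∀ i, 0 ≤ Z ω i)
    (hint : ∀ i, Integrable (fun ω ↦ Z ω i) μ) :
    ∫ ω, ⨆ i, Z ω i ∂μ = ∑ i, ∫ ω, Z ω i ∂μ ↔
      ∀ᵐ ω ∂μ, (Function.support (Z ω)).Subsingleton := by
  rw [← integral_finsetSum _ fun i _ ↦ hint i,
    integral_eq_iff_of_ae_le (integrable_iSup hint)
      (integrable_finsetSum _ fun i _ ↦ hint i) (hZ.mono fun _ ↦ iSup_le_sum_of_nonneg)]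
  exact Filter.eventually_congr (hZ.mono fun _ ↦ iSup_eq_sum_iff_support_subsingleton)

lemma integral_iSup_mul_eq_sum_integral_mul (hY : ∀ᵐ ω ∂μ, ∀ i, 0 ≤ Y ω i)
    (hZ : ∀ᵐ ω ∂μ, ∀ i, 0 ≤ Z ω i) (hint : ∀ i, Integrable (fun ω ↦ Z ω i) μ)
    (hYZint : ∀ i, Integrable (fun ω ↦ Y ω i * Z ω i) μ)
    (h : ∫ ω, ⨆ i, Z ω i ∂μ = ∑ i, ∫ ω, Z ω i ∂μ) :
    ∫ ω, ⨆ i, Y ω i * Z ω i ∂μ = ∑ i, ∫ ω, Y ω i * Z ω i ∂μ := by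
  have hYZ : ∀ᵐ ω ∂μ, ∀ i, 0 ≤ Y ω i * Z ω i := by
    filter_upwards [hY, hZ] with ω hYω hZω i using mul_nonneg (hYω i) (hZω i)
  rw [integral_iSup_eq_sum_integral_iff hZ hint] at h
  exact (integral_iSup_eq_sum_integral_iff hYZ hYZint).2 <|
    h.mono fun ω hω ↦ hω.anti (Function.support_mul_subset_right (Y ω) (Z ω))

end ExpectedSup

theorem l1Norm_absorbing_for_dNorm_mul_general {ι : Type*} [Fintype ι] {Ω : Type*}
    [MeasurableSpace Ω] {μ : Measure Ω} {Z₁ Z₂ : Ω → ι → ℝ}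
    (hZ₁nn : ∀ i, ∀ᵐ ω ∂μ, 0 ≤ Z₁ ω i)
    (hZ₂nn : ∀ i, ∀ᵐ ω ∂μ, 0 ≤ Z₂ ω i)
    (hZ₁int : ∀ i, Integrable (fun ω ↦ Z₁ ω i) μ)
    (hZ₂int : ∀ i, Integrable (fun ω ↦ Z₂ ω i) μ)
    (hZ₁mean : ∀ i, ∫ ω, Z₁ ω i ∂μ = 1)
    (hZ₂mean : ∀ i, ∫ ω, Z₂ ω i ∂μ = 1)
    (hindep : ∀ i, IndepFun (fun ω ↦ Z₁ ω i) (fun ω ↦ Z₂ ω i) μ)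
    (hZ₂sup : ∫ ω, ⨆ i, Z₂ ω i ∂μ = Fintype.card ι) (x : ι → ℝ) :
    ∫ ω, ⨆ i, |x i| * (Z₁ ω i * Z₂ ω i) ∂μ = ∑ i, |x i| := by
  have hint (i : ι) : Integrable (fun ω ↦ |x i| * Z₁ ω i * Z₂ ω i) μ := by
    simpa only [mul_assoc, Pi.mul_apply] using
      ((hindep i).integrable_mul (hZ₁int i) (hZ₂int i)).const_mul |x i|
  have hmean (i : ι) : ∫ ω, Z₁ ω i * Z₂ ω i ∂μ = 1 := by
    rw [(hindep i).integral_fun_mul_eq_mul_integral (hZ₁int i).1 (hZ₂int i).1,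
      hZ₁mean, hZ₂mean, one_mul]
  have hweight : ∀ᵐ ω ∂μ, ∀ i, 0 ≤ |x i| * Z₁ ω i :=
    (ae_all_iff.2 hZ₁nn).mono fun ω hω i ↦ mul_nonneg (abs_nonneg _) (hω i)
  have hsup : ∫ ω, ⨆ i, Z₂ ω i ∂μ = ∑ i, ∫ ω, Z₂ ω i ∂μ := by simp [hZ₂mean, hZ₂sup]
  calc ∫ ω, ⨆ i, |x i| * (Z₁ ω i * Z₂ ω i) ∂μ
      = ∑ i, ∫ ω, |x i| * (Z₁ ω i * Z₂ ω i) ∂μ := by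
        simpa only [mul_assoc] using integral_iSup_mul_eq_sum_integral_mul hweight
          (ae_all_iff.2 hZ₂nn) hZ₂int hint hsup
    _ = ∑ i, |x i| := by simp only [integral_const_mul, hmean, mul_one]

/-- Multiplication by the independence norm always yields the independence norm. -/
theorem l1Norm_absorbing_for_dNorm_mul {d : ℕ} (hd : 0 < d) {Ω : Type*} [MeasurableSpace Ω]
    (μ : Measure Ω) [IsProbabilityMeasure μ]
    (Z₁ Z₂ : Ω → Fin d → ℝ)
    (hZ₁m : Measurable Z₁) (hZ₂m : Measurable Z₂)
    (hZ₁nn : ∀ i, ∀ᵐ ω ∂μ, 0 ≤ Z₁ ω i)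
    (hZ₂nn : ∀ i, ∀ᵐ ω ∂μ, 0 ≤ Z₂ ω i)
    (hZ₁int : ∀ i, Integrable (fun ω => Z₁ ω i) μ)
    (hZ₂int : ∀ i, Integrable (fun ω => Z₂ ω i) μ)
    (hZ₁mean : ∀ i, ∫ ω, Z₁ ω i ∂μ = 1)
    (hZ₂mean : ∀ i, ∫ ω, Z₂ ω i ∂μ = 1)
    (hindep : IndepFun Z₁ Z₂ μ)
    (hZ₂l1 : ∀ x : Fin d → ℝ, (∫ ω, ⨆ i, |x i| * Z₂ ω i ∂μ) = ∑ i, |x i|) :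
    ∀ x : Fin d → ℝ,
      (∫ ω, ⨆ i, |x i| * (Z₁ ω i * Z₂ ω i) ∂μ) = ∑ i, |x i| := by
  exact l1Norm_absorbing_for_dNorm_mul_general hZ₁nn hZ₂nn hZ₁int hZ₂int hZ₁mean hZ₂mean
    (fun i ↦ hindep.comp (measurable_pi_apply i) (measurable_pi_apply i))
    (by simpa using hZ₂l1 fun _ ↦ 1)
end

section
/- A bivariate D-norm is idempotent if and only if it is the sup-norm or the L¹-norm: let Z = (Z_1, Z_2) be a generator on ℝ² and Z' an independent copy of Z; if E(max(|x_1| Z_1 Z'_1, |x_2| Z_2 Z'_2)) = E(max(|x_1| Z_1, |x_2| Z_2)) for all x ∈ ℝ², then either E(max(|x_1| Z_1, |x_2| Z_2)) = max(|x_1|, |x_2|) for all x ∈ ℝ², or E(max(|x_1| Z_1, |x_2| Z_2)) = |x_1| + |x_2| for all x ∈ ℝ². -/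
open MeasureTheory ProbabilityTheory

/-!
The idea is to compare the dual D-norm `E min(|x₁| Z₁, |x₂| Z₂)` with `√|x₁ x₂|`. Since
`min a b ≤ √(a b)`, it is at most `s √|x₁ x₂|` with `s = E √(Z₁ Z₂) ≤ 1`. If `Z'` is an independent
generator with affinity `s' = E √(Z'₁ Z'₂)`, then conditioning on `Z'` turns a bound `C √|x₁ x₂|`
for `Z` into the bound `C s' √|x₁ x₂|` for `Z Z'`. When `Z Z'` and `Z` generate the same norm this
can be iterated: either `s' < 1` and the dual D-norm of `Z` vanishes, which is the L¹ case, or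
`s' = 1`, which is equality in AM-GM and forces `Z'₁ = Z'₂` almost surely, the sup-norm case.
-/

section

variable {Ω Ω' : Type*} [MeasurableSpace Ω] [MeasurableSpace Ω'] {μ : Measure Ω} {ν : Measure Ω'}
  {Z Z' : Ω → ℝ × ℝ} {W : Ω' → ℝ × ℝ}

theorem min_le_sqrt_mul {a b : ℝ} (ha : 0 ≤ a) (hb : 0 ≤ b) : min a b ≤ √(a * b) :=
  Real.le_sqrt_of_sq_le <| by
    rw [sq]
    exact mul_le_mul (min_le_left a b) (min_le_right a b) (le_min ha hb) ha

theorem integral_comp_prodMk_of_indepFun {α β E : Type*} [MeasurableSpace α] [MeasurableSpace β]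
    [NormedAddCommGroup E] [NormedSpace ℝ E] [IsFiniteMeasure μ] {X : Ω → α} {Y : Ω → β}
    {f : α × β → E} (hX : AEMeasurable X μ) (hY : AEMeasurable Y μ) (hindep : IndepFun X Y μ)
    (hf : StronglyMeasurable f) (hint : Integrable (fun ω => f (X ω, Y ω)) μ) :
    ∫ ω, f (X ω, Y ω) ∂μ = ∫ ω', ∫ ω, f (X ω, Y ω') ∂μ ∂μ := by
  have hlaw := hindep.map_prod_eq_prod_map_map hX hY
  have hint_law : Integrable f ((μ.map X).prod (μ.map Y)) :=
    hlaw ▸ (integrable_map_measure hf.aestronglyMeasurable (hX.prodMk hY)).2 hint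
  calc ∫ ω, f (X ω, Y ω) ∂μ
      = ∫ p, f p ∂((μ.map X).prod (μ.map Y)) := by
        rw [← hlaw, integral_map (hX.prodMk hY) hf.aestronglyMeasurable]
    _ = ∫ y, ∫ x, f (x, y) ∂(μ.map X) ∂(μ.map Y) := integral_prod_symm f hint_law
    _ = ∫ ω', ∫ x, f (x, Y ω') ∂(μ.map X) ∂μ :=
        integral_map hY hf.integral_prod_left'.aestronglyMeasurable
    _ = ∫ ω', ∫ ω, f (X ω, Y ω') ∂μ ∂μ :=
        integral_congr_ae <| .of_forall fun ω' =>
          integral_map hX (hf.comp_measurable measurable_prodMk_right).aestronglyMeasurable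

/-- Generators of bivariate D-norms: `Z` has almost surely nonnegative components of mean one.
Measurability is required only almost everywhere, through integrability. -/
structure IsDNormGenerator (Z : Ω → ℝ × ℝ) (μ : Measure Ω) : Prop where
  nonneg_fst : ∀ᵐ ω ∂μ, 0 ≤ (Z ω).1
  nonneg_snd : ∀ᵐ ω ∂μ, 0 ≤ (Z ω).2
  integrable_fst : Integrable (fun ω => (Z ω).1) μ
  integrable_snd : Integrable (fun ω => (Z ω).2) μ
  integral_fst : ∫ ω, (Z ω).1 ∂μ = 1
  integral_snd : ∫ ω, (Z ω).2 ∂μ = 1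

/-- The D-norm `‖x‖_D = E max(|x₁| Z₁, |x₂| Z₂)` generated by `Z`. -/
noncomputable def dNorm (Z : Ω → ℝ × ℝ) (μ : Measure Ω) (x : ℝ × ℝ) : ℝ :=
  ∫ ω, max (|x.1| * (Z ω).1) (|x.2| * (Z ω).2) ∂μ

/-- The dual D-norm function `E min(|x₁| Z₁, |x₂| Z₂)` of `Z`. It complements the D-norm to the
`L¹`-norm, so the `L¹`-norm is the D-norm whose dual vanishes. -/
noncomputable def dualDNorm (Z : Ω → ℝ × ℝ) (μ : Measure Ω) (x : ℝ × ℝ) : ℝ :=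
  ∫ ω, min (|x.1| * (Z ω).1) (|x.2| * (Z ω).2) ∂μ

/-- The Hellinger affinity `E √(Z₁ Z₂)` of the two measures with `μ`-densities `Z₁` and `Z₂`. For a
generator it lies in `[0, 1]` and measures how close `Z₁` and `Z₂` are. -/
noncomputable def hellingerAffinity (Z : Ω → ℝ × ℝ) (μ : Measure Ω) : ℝ :=
  ∫ ω, √((Z ω).1 * (Z ω).2) ∂μ

theorem hellingerAffinity_nonneg (Z : Ω → ℝ × ℝ) (μ : Measure Ω) : 0 ≤ hellingerAffinity Z μ :=
  integral_nonneg fun _ => Real.sqrt_nonneg _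

theorem dNorm_congr_identDistrib (hident : IdentDistrib W Z ν μ) (x : ℝ × ℝ) :
    dNorm W ν x = dNorm Z μ x :=
  (hident.comp (u := fun z : ℝ × ℝ => max (|x.1| * z.1) (|x.2| * z.2)) (by fun_prop)).integral_eq

namespace IsDNormGenerator

theorem aemeasurable (hZ : IsDNormGenerator Z μ) : AEMeasurable Z μ :=
  hZ.integrable_fst.aemeasurable.prodMk hZ.integrable_snd.aemeasurable

theorem of_identDistrib (hZ : IsDNormGenerator Z μ) (hident : IdentDistrib W Z ν μ) :
    IsDNormGenerator W ν := by
  have hfst : IdentDistrib (fun ω => (W ω).1) (fun ω => (Z ω).1) ν μ := hident.comp measurable_fst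
  have hsnd : IdentDistrib (fun ω => (W ω).2) (fun ω => (Z ω).2) ν μ := hident.comp measurable_snd
  exact
    { nonneg_fst := hfst.symm.ae_snd measurableSet_Ici hZ.nonneg_fst
      nonneg_snd := hsnd.symm.ae_snd measurableSet_Ici hZ.nonneg_snd
      integrable_fst := hfst.integrable_iff.2 hZ.integrable_fst
      integrable_snd := hsnd.integrable_iff.2 hZ.integrable_snd
      integral_fst := hfst.integral_eq.trans hZ.integral_fst
      integral_snd := hsnd.integral_eq.trans hZ.integral_snd }

theorem mul (hZ : IsDNormGenerator Z μ) (hZ' : IsDNormGenerator Z' μ) (hindep : IndepFun Z Z' μ) :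
    IsDNormGenerator (Z * Z') μ := by
  have hfst : IndepFun (fun ω => (Z ω).1) (fun ω => (Z' ω).1) μ :=
    hindep.comp measurable_fst measurable_fst
  have hsnd : IndepFun (fun ω => (Z ω).2) (fun ω => (Z' ω).2) μ :=
    hindep.comp measurable_snd measurable_snd
  exact
    { nonneg_fst := by
        filter_upwards [hZ.nonneg_fst, hZ'.nonneg_fst] with ω h h' using mul_nonneg h h'
      nonneg_snd := by
        filter_upwards [hZ.nonneg_snd, hZ'.nonneg_snd] with ω h h' using mul_nonneg h h'
      integrable_fst := hfst.integrable_mul hZ.integrable_fst hZ'.integrable_fst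
      integrable_snd := hsnd.integrable_mul hZ.integrable_snd hZ'.integrable_snd
      integral_fst :=
        (hfst.integral_mul_eq_mul_integral hZ.integrable_fst.1 hZ'.integrable_fst.1).trans <| by
          rw [hZ.integral_fst, hZ'.integral_fst, mul_one]
      integral_snd :=
        (hsnd.integral_mul_eq_mul_integral hZ.integrable_snd.1 hZ'.integrable_snd.1).trans <| by
          rw [hZ.integral_snd, hZ'.integral_snd, mul_one] }

theorem dNorm_eq_max_of_ae_eq (hZ : IsDNormGenerator Z μ) (heq : ∀ᵐ ω ∂μ, (Z ω).1 = (Z ω).2)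
    (x : ℝ × ℝ) : dNorm Z μ x = max |x.1| |x.2| := by
  calc dNorm Z μ x = ∫ ω, max |x.1| |x.2| * (Z ω).1 ∂μ := by
        refine integral_congr_ae ?_
        filter_upwards [hZ.nonneg_fst, heq] with ω hfst heqω
        rw [← heqω, max_mul_of_nonneg _ _ hfst]
    _ = max |x.1| |x.2| := by rw [integral_const_mul, hZ.integral_fst, mul_one]

theorem integrable_min (hZ : IsDNormGenerator Z μ) (x : ℝ × ℝ) :
    Integrable (fun ω => min (|x.1| * (Z ω).1) (|x.2| * (Z ω).2)) μ :=
  (hZ.integrable_fst.const_mul _).inf (hZ.integrable_snd.const_mul _)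

theorem dualDNorm_nonneg (hZ : IsDNormGenerator Z μ) (x : ℝ × ℝ) : 0 ≤ dualDNorm Z μ x := by
  refine integral_nonneg_of_ae ?_
  filter_upwards [hZ.nonneg_fst, hZ.nonneg_snd] with ω hfst hsnd
  exact le_min (by positivity) (by positivity)

theorem dNorm_add_dualDNorm (hZ : IsDNormGenerator Z μ) (x : ℝ × ℝ) :
    dNorm Z μ x + dualDNorm Z μ x = |x.1| + |x.2| := by
  have hfst : Integrable (fun ω => |x.1| * (Z ω).1) μ := hZ.integrable_fst.const_mul _
  have hsnd : Integrable (fun ω => |x.2| * (Z ω).2) μ := hZ.integrable_snd.const_mul _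
  calc dNorm Z μ x + dualDNorm Z μ x
      = ∫ ω, (max (|x.1| * (Z ω).1) (|x.2| * (Z ω).2) +
          min (|x.1| * (Z ω).1) (|x.2| * (Z ω).2)) ∂μ :=
        (integral_add (hfst.sup hsnd) (hfst.inf hsnd)).symm
    _ = ∫ ω, (|x.1| * (Z ω).1 + |x.2| * (Z ω).2) ∂μ := by simp only [max_add_min]
    _ = |x.1| + |x.2| := by
        rw [integral_add hfst hsnd, integral_const_mul, integral_const_mul, hZ.integral_fst,
          hZ.integral_snd, mul_one, mul_one]

theorem integrable_sqrt_mul (hZ : IsDNormGenerator Z μ) :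
    Integrable (fun ω => √((Z ω).1 * (Z ω).2)) μ := by
  refine (hZ.integrable_fst.add hZ.integrable_snd).mono'
    (hZ.integrable_fst.aemeasurable.mul hZ.integrable_snd.aemeasurable).sqrt.aestronglyMeasurable ?_
  filter_upwards [hZ.nonneg_fst, hZ.nonneg_snd] with ω hfst hsnd
  rw [Real.norm_of_nonneg (Real.sqrt_nonneg _), Pi.add_apply]
  exact Real.sqrt_le_iff.2 ⟨add_nonneg hfst hsnd, by nlinarith⟩

theorem sq_sqrt_sub_sqrt_ae_eq (hZ : IsDNormGenerator Z μ) :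
    (fun ω => (√(Z ω).1 - √(Z ω).2) ^ 2) =ᵐ[μ]
      fun ω => (Z ω).1 + (Z ω).2 - 2 * √((Z ω).1 * (Z ω).2) := by
  filter_upwards [hZ.nonneg_fst, hZ.nonneg_snd] with ω hfst hsnd
  rw [sub_sq, Real.sq_sqrt hfst, Real.sq_sqrt hsnd, Real.sqrt_mul hfst]
  ring

theorem integrable_sq_sqrt_sub_sqrt (hZ : IsDNormGenerator Z μ) :
    Integrable (fun ω => (√(Z ω).1 - √(Z ω).2) ^ 2) μ :=
  ((hZ.integrable_fst.add hZ.integrable_snd).sub (hZ.integrable_sqrt_mul.const_mul 2)).congr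
    hZ.sq_sqrt_sub_sqrt_ae_eq.symm

theorem integral_sq_sqrt_sub_sqrt (hZ : IsDNormGenerator Z μ) :
    ∫ ω, (√(Z ω).1 - √(Z ω).2) ^ 2 ∂μ = 2 - 2 * hellingerAffinity Z μ := by
  have hsum : Integrable (fun ω => (Z ω).1 + (Z ω).2) μ :=
    hZ.integrable_fst.add hZ.integrable_snd
  rw [integral_congr_ae hZ.sq_sqrt_sub_sqrt_ae_eq,
    integral_sub hsum (hZ.integrable_sqrt_mul.const_mul 2),
    integral_add hZ.integrable_fst hZ.integrable_snd, integral_const_mul, hZ.integral_fst,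
    hZ.integral_snd, one_add_one_eq_two, hellingerAffinity]

theorem hellingerAffinity_le_one (hZ : IsDNormGenerator Z μ) : hellingerAffinity Z μ ≤ 1 := by
  have hnonneg : 0 ≤ ∫ ω, (√(Z ω).1 - √(Z ω).2) ^ 2 ∂μ := integral_nonneg fun _ => sq_nonneg _
  linarith [hZ.integral_sq_sqrt_sub_sqrt]

theorem ae_eq_of_hellingerAffinity_eq_one (hZ : IsDNormGenerator Z μ)
    (hone : hellingerAffinity Z μ = 1) : ∀ᵐ ω ∂μ, (Z ω).1 = (Z ω).2 := by
  have hzero : ∫ ω, (√(Z ω).1 - √(Z ω).2) ^ 2 ∂μ = 0 := by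
    rw [hZ.integral_sq_sqrt_sub_sqrt, hone, mul_one, sub_self]
  have hsq := (integral_eq_zero_iff_of_nonneg (fun _ => sq_nonneg _)
    hZ.integrable_sq_sqrt_sub_sqrt).1 hzero
  filter_upwards [hsq, hZ.nonneg_fst, hZ.nonneg_snd] with ω hω hfst hsnd
  exact (Real.sqrt_inj hfst hsnd).1 (sub_eq_zero.1 (sq_eq_zero_iff.1 hω))

theorem dualDNorm_le_hellingerAffinity_mul (hZ : IsDNormGenerator Z μ) (x : ℝ × ℝ) :
    dualDNorm Z μ x ≤ hellingerAffinity Z μ * √|x.1 * x.2| := by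
  rw [hellingerAffinity, ← integral_mul_const]
  refine integral_mono_ae (hZ.integrable_min x) (hZ.integrable_sqrt_mul.mul_const _) ?_
  filter_upwards [hZ.nonneg_fst, hZ.nonneg_snd] with ω hfst hsnd
  calc min (|x.1| * (Z ω).1) (|x.2| * (Z ω).2)
      ≤ √(|x.1| * (Z ω).1 * (|x.2| * (Z ω).2)) :=
        min_le_sqrt_mul (by positivity) (by positivity)
    _ = √((Z ω).1 * (Z ω).2) * √|x.1 * x.2| := by
        rw [← Real.sqrt_mul (mul_nonneg hfst hsnd), abs_mul]
        ring_nf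

theorem dualDNorm_mul_eq_integral [IsFiniteMeasure μ] (hZ : IsDNormGenerator Z μ)
    (hZ' : IsDNormGenerator Z' μ) (hindep : IndepFun Z Z' μ) (x : ℝ × ℝ) :
    dualDNorm (Z * Z') μ x = ∫ ω, dualDNorm Z μ (x * Z' ω) ∂μ := by
  let scaledMin : (ℝ × ℝ) × (ℝ × ℝ) → ℝ :=
    fun p => min (|x.1 * p.2.1| * p.1.1) (|x.2 * p.2.2| * p.1.2)
  have hscaled : StronglyMeasurable scaledMin :=
    Measurable.stronglyMeasurable (by fun_prop)
  have hae : (fun ω => min (|x.1| * ((Z * Z') ω).1) (|x.2| * ((Z * Z') ω).2)) =ᵐ[μ]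
      fun ω => scaledMin (Z ω, Z' ω) := by
    filter_upwards [hZ'.nonneg_fst, hZ'.nonneg_snd] with ω hfst hsnd
    simp only [scaledMin, Pi.mul_apply, Prod.fst_mul, Prod.snd_mul, abs_mul, abs_of_nonneg hfst,
      abs_of_nonneg hsnd]
    ring_nf
  exact (integral_congr_ae hae).trans <|
    integral_comp_prodMk_of_indepFun hZ.aemeasurable hZ'.aemeasurable hindep hscaled
      (((hZ.mul hZ' hindep).integrable_min x).congr hae)

theorem dualDNorm_mul_le [IsFiniteMeasure μ] (hZ : IsDNormGenerator Z μ)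
    (hZ' : IsDNormGenerator Z' μ) (hindep : IndepFun Z Z' μ) {C : ℝ}
    (hC : ∀ x, dualDNorm Z μ x ≤ C * √|x.1 * x.2|) (x : ℝ × ℝ) :
    dualDNorm (Z * Z') μ x ≤ C * hellingerAffinity Z' μ * √|x.1 * x.2| := by
  calc dualDNorm (Z * Z') μ x = ∫ ω, dualDNorm Z μ (x * Z' ω) ∂μ :=
        hZ.dualDNorm_mul_eq_integral hZ' hindep x
    _ ≤ ∫ ω, C * √|x.1 * x.2| * √((Z' ω).1 * (Z' ω).2) ∂μ := by
        refine integral_mono_of_nonneg (.of_forall fun ω => hZ.dualDNorm_nonneg _)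
          (hZ'.integrable_sqrt_mul.const_mul _) ?_
        filter_upwards [hZ'.nonneg_fst, hZ'.nonneg_snd] with ω hfst hsnd
        refine (hC (x * Z' ω)).trans_eq ?_
        rw [Prod.fst_mul, Prod.snd_mul, mul_mul_mul_comm, abs_mul,
          abs_of_nonneg (mul_nonneg hfst hsnd), Real.sqrt_mul (abs_nonneg _), mul_assoc]
    _ = C * hellingerAffinity Z' μ * √|x.1 * x.2| := by
        rw [integral_const_mul, hellingerAffinity, mul_right_comm]

theorem dualDNorm_eq_zero_of_hellingerAffinity_lt_one [IsFiniteMeasure μ]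
    (hZ : IsDNormGenerator Z μ) (hZ' : IsDNormGenerator Z' μ) (hindep : IndepFun Z Z' μ)
    (hinvariant : dualDNorm (Z * Z') μ = dualDNorm Z μ) (hlt : hellingerAffinity Z' μ < 1)
    (x : ℝ × ℝ) : dualDNorm Z μ x = 0 := by
  have hbound : ∀ (n : ℕ) (y : ℝ × ℝ), dualDNorm Z μ y ≤
      hellingerAffinity Z μ * hellingerAffinity Z' μ ^ n * √|y.1 * y.2| := by
    intro n
    induction n with
    | zero => simpa only [pow_zero, mul_one] using hZ.dualDNorm_le_hellingerAffinity_mul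
    | succ n ih =>
      simpa only [hinvariant, pow_succ, ← mul_assoc] using hZ.dualDNorm_mul_le hZ' hindep ih
  have hlim := ((tendsto_pow_atTop_nhds_zero_of_lt_one (hellingerAffinity_nonneg Z' μ)
    hlt).const_mul (hellingerAffinity Z μ)).mul_const √|x.1 * x.2|
  rw [mul_zero, zero_mul] at hlim
  exact (ge_of_tendsto' hlim fun n => hbound n x).antisymm (hZ.dualDNorm_nonneg x)

end IsDNormGenerator

theorem bivariate_idempotent_dNorm_general [IsFiniteMeasure μ] (hZ : IsDNormGenerator Z μ)
    (hZ' : IsDNormGenerator Z' μ) (hindep : IndepFun Z Z' μ)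
    (hinvariant : ∀ x, dNorm (Z * Z') μ x = dNorm Z μ x) :
    (∀ x, dNorm Z' μ x = max |x.1| |x.2|) ∨ ∀ x, dNorm Z μ x = |x.1| + |x.2| := by
  rcases hZ'.hellingerAffinity_le_one.eq_or_lt with hone | hlt
  · exact .inl (hZ'.dNorm_eq_max_of_ae_eq (hZ'.ae_eq_of_hellingerAffinity_eq_one hone))
  · have hdual : dualDNorm (Z * Z') μ = dualDNorm Z μ := by
      funext x
      linarith [(hZ.mul hZ' hindep).dNorm_add_dualDNorm x, hZ.dNorm_add_dualDNorm x, hinvariant x]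
    refine .inr fun x => ?_
    rw [← hZ.dNorm_add_dualDNorm x,
      hZ.dualDNorm_eq_zero_of_hellingerAffinity_lt_one hZ' hindep hdual hlt x, add_zero]

end

/-- A bivariate D-norm is idempotent iff it is the sup-norm or the L¹-norm. -/
theorem bivariate_idempotent_dNorm {Ω : Type*} [MeasurableSpace Ω]
    (μ : Measure Ω) [IsProbabilityMeasure μ]
    (Z Z' : Ω → ℝ × ℝ) (hZm : Measurable Z) (hZ'm : Measurable Z')
    (hZnn₁ : ∀ᵐ ω ∂μ, 0 ≤ (Z ω).1) (hZnn₂ : ∀ᵐ ω ∂μ, 0 ≤ (Z ω).2)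
    (hZint₁ : Integrable (fun ω => (Z ω).1) μ)
    (hZint₂ : Integrable (fun ω => (Z ω).2) μ)
    (hZmean₁ : ∫ ω, (Z ω).1 ∂μ = 1) (hZmean₂ : ∫ ω, (Z ω).2 ∂μ = 1)
    (hindep : IndepFun Z Z' μ) (hid : μ.map Z' = μ.map Z)
    (hidem : ∀ x : ℝ × ℝ,
      (∫ ω, max (|x.1| * ((Z ω).1 * (Z' ω).1)) (|x.2| * ((Z ω).2 * (Z' ω).2)) ∂μ) =
        ∫ ω, max (|x.1| * (Z ω).1) (|x.2| * (Z ω).2) ∂μ) :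
    (∀ x : ℝ × ℝ,
      (∫ ω, max (|x.1| * (Z ω).1) (|x.2| * (Z ω).2) ∂μ) = max |x.1| |x.2|) ∨
    (∀ x : ℝ × ℝ,
      (∫ ω, max (|x.1| * (Z ω).1) (|x.2| * (Z ω).2) ∂μ) = |x.1| + |x.2|) := by
  have hZ : IsDNormGenerator Z μ := ⟨hZnn₁, hZnn₂, hZint₁, hZint₂, hZmean₁, hZmean₂⟩
  have hident : IdentDistrib Z' Z μ μ := ⟨hZ'm.aemeasurable, hZm.aemeasurable, hid⟩
  exact (bivariate_idempotent_dNorm_general hZ (hZ.of_identDistrib hident) hindep hidem).imp_left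
    fun hmax x => (dNorm_congr_identDistrib hident x).symm.trans (hmax x)
end
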